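/- (Terminating very-well-poised ₆φ₅ summation) Let q, a, b, c be complex numbers, n a nonnegative integer, and suppose a has a square root a^{1/2} fixed; assume all denominator factors below are nonzero. Then ∑_{k=0}^{n} ((1 - a q^{2k})/(1 - a)) · ((a;q)_k (b;q)_k (c;q)_k (q^{-n};q)_k / ((q;q)_k (aq/b;q)_k (aq/c;q)_k (aq^{n+1};q)_k)) (a q^{n+1}/(bc))^k = (aq;q)_n (aq/(bc);q)_n / ((aq/b;q)_n (aq/c;q)_n). (Here the very-well-poised factor (1-aq^{2k})/(1-a) equals (qa^{1/2};q)_k(-qa^{1/2};q)_k/((a^{1/2};q)_k(-a^{1/2};q)_k).) -/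

import Mathlib

/-- The finite q-shifted factorial `(a;q)_k = ∏_{j=0}^{k-1} (1 - a q^j)`. -/
noncomputable def qPoch (a q : ℂ) (k : ℕ) : ℂ := ∏ j ∈ Finset.range k, (1 - a * q ^ j)

lemma qp_zero (a q : ℂ) : qPoch a q 0 = 1 := by simp [qPoch]

lemma qp_succ (a q : ℂ) (k : ℕ) : qPoch a q (k+1) = qPoch a q k * (1 - a * q ^ k) := by
  simp [qPoch, Finset.prod_range_succ]

noncomputable def PP (q a b c : ℂ) (k : ℕ) : ℂ :=
  qPoch a q k * qPoch b q k * qPoch c q k /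
    ((1 - a) * qPoch q q k * qPoch (a * q / b) q k * qPoch (a * q / c) q k) * (a / (b * c)) ^ k

noncomputable def QQ (q a : ℂ) (n k : ℕ) : ℂ :=
  qPoch ((q ^ n)⁻¹) q k / qPoch (a * q ^ (n + 1)) q k * (q ^ (n + 1)) ^ k

lemma PP_succ (q a b c : ℂ) (k : ℕ) : PP q a b c (k+1) = PP q a b c k *
    ((1 - a * q ^ k) * (1 - b * q ^ k) * (1 - c * q ^ k) /
    ((1 - q * q ^ k) * (1 - a * q / b * q ^ k) * (1 - a * q / c * q ^ k)) * (a / (b * c))) := by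
  simp only [PP, qp_succ, pow_succ, div_eq_mul_inv, mul_inv]
  ring

lemma QQ_succ (q a : ℂ) (n k : ℕ) : QQ q a n (k+1) = QQ q a n k *
    ((1 - (q ^ n)⁻¹ * q ^ k) / (1 - a * q ^ (n+1) * q ^ k) * q ^ (n+1)) := by
  simp only [QQ, qp_succ, pow_succ, div_eq_mul_inv, mul_inv]
  ring

lemma QQ_rel (q a : ℂ) (hq : q ≠ 0) (n k : ℕ) (h : ∀ j ≤ n + k + 1, 1 - a * q ^ j ≠ 0) :
    QQ q a (n+1) k * ((q ^ n * q - q ^ k) * (1 - a * q ^ n * q * q ^ k)) =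
      QQ q a n k * ((q ^ n * q - 1) * (1 - a * q ^ n * q) * q ^ k) := by
  induction k with
  | zero => simp [QQ, qp_zero]
  | succ k ih =>
    have ih := ih (fun j hj => h j (by omega))
    have h1 := h (n + k + 1) (by omega)
    have h2 := h (n + k + 2) (by omega)
    rw [QQ_succ, QQ_succ]
    have hN : q ^ n ≠ 0 := pow_ne_zero _ hq
    simp only [pow_add, pow_succ, pow_zero, one_mul] at *
    generalize q ^ n = N at *
    generalize q ^ k = K at *
    generalize QQ q a (n+1) k = s' at *
    generalize QQ q a n k = s at *
    have h1' : 1 - a * N * q * K ≠ 0 := by convert h1 using 1; ring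
    have h2' : 1 - a * N * q * q * K ≠ 0 := by convert h2 using 1; ring
    have e1 : 1 - a * (N * q) * K ≠ 0 := by convert h1 using 1; ring
    have e2 : 1 - a * (N * q * q) * K ≠ 0 := by convert h2 using 1; ring
    have ih' : s' * (N * q - K) = s * ((N * q - 1) * (1 - a * N * q) * K) / (1 - a * N * q * K) := by
      rw [eq_div_iff h1']; linear_combination ih
    have : s' * ((1 - (N * q)⁻¹ * K) / (1 - a * (N * q * q) * K) * (N * q * q)) *
      ((N * q - K * q) * (1 - a * N * q * (K * q))) = (s' * (N * q - K)) * (q * q * (N - K)) := by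
      rw [show a * N * q * (K * q) = a * (N * q * q) * K by ring]
      generalize 1 - a * (N * q * q) * K = D at *
      field_simp
    rw [this, ih', show a * (N * q) * K = a * N * q * K by ring]
    generalize 1 - a * N * q * K = D at *
    field_simp

lemma core (q a b c N K x B C D D' E1 E2 E3 : ℂ) (hx : x = a * N * q)
    (hB : B = b - x) (hC : C = c - x) (hD : D = 1 - x * K) (hD' : D' = 1 - x * (K * q))
    (hE1 : E1 = 1 - q * K) (hE2 : E2 = b - a * q * K) (hE3 : E3 = c - a * q * K)
    (B0 : B ≠ 0) (C0 : C ≠ 0) (D0 : D ≠ 0) (D0' : D' ≠ 0) (E10 : E1 ≠ 0) (E20 : E2 ≠ 0)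
    (E30 : E3 ≠ 0) :
    x * (1 - x) / (B * C) / D + (1 - a * (K * q) ^ 2) * (a / (E1 * E2 * E3)) *
      (q * ((N * q - 1) * (1 - x) * K) / (D * D')
        - (1 - x) * (b * c - x) / (B * C) * ((N - K) * q / D)) =
    x * (1 - x) / (B * C) * ((1 - a * (K * q)) * (1 - b * (K * q)) * (1 - c * (K * q)) / D') *
      (a / (E1 * E2 * E3)) * ((N - K) * q / D) := by
  field_simp
  subst hB hC hD hD' hE1 hE2 hE3
  subst hx
  ring

lemma key (q a b c p s s' N K : ℂ) (hq : q ≠ 0) (hb : b ≠ 0) (hc : c ≠ 0) (hN : N ≠ 0)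
    (h1 : 1 - q * K ≠ 0) (h2 : b - a * q * K ≠ 0) (h3 : c - a * q * K ≠ 0)
    (h4 : 1 - a * N * q * K ≠ 0) (h5 : 1 - a * N * q * q * K ≠ 0)
    (h6 : b - a * N * q ≠ 0) (h7 : c - a * N * q ≠ 0) (h8 : N - K ≠ 0)
    (hs : s' * ((N * q - K * q) * (1 - a * N * q * (K * q))) =
      s * ((1 - N⁻¹ * K) / (1 - a * (N * q) * K) * (N * q)) *
        ((N * q - 1) * (1 - a * N * q) * (K * q))) :
    (a * N * q) * (1 - a * N * q) / ((b - a * N * q) * (c - a * N * q)) *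
      ((1 - a * K) * (1 - b * K) * (1 - c * K) / (1 - a * N * q * K)) * p * s +
    ((1 - a * (K * q) ^ 2) * (p * ((1 - a * K) * (1 - b * K) * (1 - c * K) /
    ((1 - q * K) * (1 - a * q / b * K) * (1 - a * q / c * K)) * (a / (b * c)))) * s' -
     (1 - a * N * q) * (b * c - a * N * q) / ((b - a * N * q) * (c - a * N * q)) *
    ((1 - a * (K * q) ^ 2) * (p * ((1 - a * K) * (1 - b * K) * (1 - c * K) /
    ((1 - q * K) * (1 - a * q / b * K) * (1 - a * q / c * K)) * (a / (b * c)))) *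
      (s * ((1 - N⁻¹ * K) / (1 - a * (N * q) * K) * (N * q))))) = 
    (a * N * q) * (1 - a * N * q) / ((b - a * N * q) * (c - a * N * q)) *
      ((1 - a * (K * q)) * (1 - b * (K * q)) * (1 - c * (K * q)) / (1 - a * N * q * (K * q))) *
      (p * ((1 - a * K) * (1 - b * K) * (1 - c * K) /
    ((1 - q * K) * (1 - a * q / b * K) * (1 - a * q / c * K)) * (a / (b * c)))) *
     (s * ((1 - N⁻¹ * K) / (1 - a * (N * q) * K) * (N * q))) := by
  have e4 : 1 - a * (N * q) * K ≠ 0 := by convert h4 using 1; ring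
  have e5 : 1 - a * N * q * (K * q) ≠ 0 := by convert h5 using 1; ring
  have e8 : N * q - K * q ≠ 0 := by rw [← sub_mul]; exact mul_ne_zero h8 hq
  have hs' : s' = s * (q * ((N * q - 1) * (1 - a * N * q) * K)) /
      ((1 - a * N * q * K) * (1 - a * N * q * (K * q))) := by
    rw [← eq_div_iff (mul_ne_zero e8 e5)] at hs
    rw [hs]
    field_simp
  have e2 : 1 - a * q / b * K = (b - a * q * K) / b := by field_simp
  have e3 : 1 - a * q / c * K = (c - a * q * K) / c := by field_simp
  have e1 : 1 - N⁻¹ * K = (N - K) / N := by field_simp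
  have e9 : (N - K) / N / (1 - a * N * q * K) * (N * q) = (N - K) * q / (1 - a * N * q * K) := by
    field_simp
  have e10 : (1 - a * K) * (1 - b * K) * (1 - c * K) /
    ((1 - q * K) * ((b - a * q * K) / b) * ((c - a * q * K) / c)) * (a / (b * c)) =
    (1 - a * K) * (1 - b * K) * (1 - c * K) *
      (a / ((1 - q * K) * (b - a * q * K) * (c - a * q * K))) := by
    generalize (1 - a * K) * (1 - b * K) * (1 - c * K) = W
    field_simp
  have co := core q a b c N K _ _ _ _ _ _ _ _ rfl rfl rfl rfl rfl rfl rfl rfl h6 h7 h4 e5 h1 h2 h3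
  rw [hs', e1, e2, e3, show a * (N * q) * K = a * N * q * K by ring, e9, e10]
  generalize (1 - a * K) * (1 - b * K) * (1 - c * K) = W at *
  generalize (a / ((1 - q * K) * (b - a * q * K) * (c - a * q * K))) = M at *
  generalize (1 - a * (K * q)) * (1 - b * (K * q)) * (1 - c * (K * q)) = W' at *
  generalize b - a * N * q = B at *
  generalize c - a * N * q = C at *
  generalize 1 - a * N * q * K = D at *
  generalize 1 - a * N * q * (K * q) = D' at *
  linear_combination (W * p * s) * co

noncomputable def TT (q a b c : ℂ) (n k : ℕ) : ℂ :=
  (1 - a * (q ^ k) ^ 2) * PP q a b c k * QQ q a n k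

noncomputable def HH (q a b c : ℂ) (n k : ℕ) : ℂ :=
  (a * q ^ n * q) * (1 - a * q ^ n * q) / ((b - a * q ^ n * q) * (c - a * q ^ n * q)) *
      ((1 - a * q ^ k) * (1 - b * q ^ k) * (1 - c * q ^ k) / (1 - a * q ^ n * q * q ^ k)) *
      PP q a b c k * QQ q a n k

lemma partial_sum (q a b c : ℂ) (hq : q ≠ 0) (hb : b ≠ 0) (hc : c ≠ 0) (n : ℕ)
    (h1 : ∀ j ≤ 2 * n + 2, 1 - a * q ^ j ≠ 0)
    (h2 : ∀ j ≤ n, 1 - q ^ (j + 1) ≠ 0)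
    (h3 : ∀ j ≤ n, b - a * q ^ (j + 1) ≠ 0)
    (h4 : ∀ j ≤ n, c - a * q ^ (j + 1) ≠ 0) (m : ℕ) (hm : m ≤ n) :
    ∑ k ∈ Finset.range (m + 1), (TT q a b c (n+1) k -
      (1 - a * q ^ n * q) * (b * c - a * q ^ n * q) /
        ((b - a * q ^ n * q) * (c - a * q ^ n * q)) * TT q a b c n k) = HH q a b c n m := by
  have h6 := h3 n le_rfl
  have h7 := h4 n le_rfl
  simp only [pow_succ, ← mul_assoc] at h6 h7
  induction m with
  | zero =>
    have a0 := h1 0 (by omega)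
    have a1 := h1 (n + 1) (by omega)
    simp only [pow_succ, ← mul_assoc, pow_zero, mul_one] at a0 a1
    simp only [zero_add, Finset.sum_range_one, TT, HH, PP, QQ, qp_zero, pow_zero]
    field_simp
    ring
  | succ m ih =>
    rw [Finset.sum_range_succ, ih (by omega)]
    simp only [TT, HH]
    have hs := QQ_rel q a hq n (m+1) (fun j hj => h1 j (by omega))
    have hN : q ^ n ≠ 0 := pow_ne_zero _ hq
    rw [PP_succ]
    rw [QQ_succ q a n] at hs ⊢
    have g1 := h2 m (by omega)
    have g2 := h3 m (by omega)
    have g3 := h4 m (by omega)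
    have g4 := h1 (n+m+1) (by omega)
    have g5 := h1 (n+m+2) (by omega)
    have g8 : q ^ n - q ^ m ≠ 0 := by
      have e := h2 (n - m - 1) (by omega)
      have : q ^ n = q ^ m * q ^ (n - m - 1 + 1) := by rw [← pow_add]; congr 1; omega
      rw [this]
      intro h
      apply mul_ne_zero (pow_ne_zero m hq) e
      linear_combination -h
    generalize QQ q a (n+1) (m+1) = s' at *
    simp only [pow_succ q, pow_add q, pow_zero, one_mul] at *
    apply key q a b c _ _ s' (q^n) (q^m) hq hb hc hN
    · convert g1 using 1; ring
    · convert g2 using 1; ring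
    · convert g3 using 1; ring
    · convert g4 using 1; ring
    · convert g5 using 1; ring
    · exact h6
    · exact h7
    · exact g8
    · exact hs

lemma last_term (q a b c : ℂ) (hq : q ≠ 0) (hb : b ≠ 0) (hc : c ≠ 0) (n : ℕ)
    (h1 : ∀ j ≤ 2 * n + 2, 1 - a * q ^ j ≠ 0)
    (h2 : ∀ j ≤ n, 1 - q ^ (j + 1) ≠ 0)
    (h3 : ∀ j ≤ n, b - a * q ^ (j + 1) ≠ 0)
    (h4 : ∀ j ≤ n, c - a * q ^ (j + 1) ≠ 0) :
    HH q a b c n n + TT q a b c (n+1) (n+1) = 0 := by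
  have h6 := h3 n le_rfl
  have h7 := h4 n le_rfl
  have h8 := h2 n le_rfl
  have g4 := h1 (n+n+1) (by omega)
  have g5 := h1 (n+n+2) (by omega)
  have hN : q ^ n ≠ 0 := pow_ne_zero _ hq
  have hs := QQ_rel q a hq n n (fun j hj => h1 j (by omega))
  simp only [TT, HH]
  rw [PP_succ, QQ_succ]
  generalize QQ q a (n+1) n = s' at *
  simp only [pow_succ q, pow_add q, pow_zero, one_mul] at *
  generalize QQ q a n n = s at *
  generalize PP q a b c n = p at *
  generalize q ^ n = N at *
  have e0 : N * q - N = - (N * (1 - q)) := by ring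
  have e4 : 1 - a * N * q * N ≠ 0 := by convert g4 using 1; ring
  have e5 : 1 - a * N * q * q * N ≠ 0 := by convert g5 using 1; ring
  have e2 : 1 - a * q / b * N = (b - a * N * q) / b := by field_simp
  have e3 : 1 - a * q / c * N = (c - a * N * q) / c := by field_simp
  have e1 : 1 - (N * q)⁻¹ * N = (N * q - N) / (N * q) := by field_simp
  have f6 : b - a * N * q ≠ 0 := by convert h6 using 1; ring
  have f7 : c - a * N * q ≠ 0 := by convert h7 using 1; ring
  have f8 : 1 - q * N ≠ 0 := by convert h8 using 1; ring
  have hs' : s' * (N * q - N) = s * ((N * q - 1) * (1 - a * N * q) * N) / (1 - a * N * q * N) := by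
    rw [eq_div_iff e4]; linear_combination hs
  have : s' * ((1 - (N * q)⁻¹ * N) / (1 - a * (N * q * q) * N) * (N * q * q)) =
     (s' * (N * q - N)) * (q / (1 - a * N * q * q * N)) := by
    rw [e1, show a * (N * q * q) * N = a * N * q * q * N by ring]
    field_simp
  rw [this, hs', e2, e3]
  have e10 : (1 - a * N) * (1 - b * N) * (1 - c * N) /
    ((1 - q * N) * ((b - a * N * q) / b) * ((c - a * N * q) / c)) * (a / (b * c)) =
    (1 - a * N) * (1 - b * N) * (1 - c * N) *
      (a / ((1 - q * N) * (b - a * N * q) * (c - a * N * q))) := by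
    generalize (1 - a * N) * (1 - b * N) * (1 - c * N) = W
    field_simp
  rw [e10, show 1 - a * (N * q) ^ 2 = 1 - a * N * q * q * N by ring,
    show N * q - 1 = -(1 - q * N) by ring]
  generalize (1 - a * N) * (1 - b * N) * (1 - c * N) = W at *
  generalize b - a * N * q = B at *
  generalize c - a * N * q = C at *
  generalize 1 - a * N * q * N = D at *
  generalize 1 - a * N * q * q * N = D' at *
  generalize 1 - q * N = E at *
  field_simp
  ring

lemma gen (q a b c : ℂ) (hq : q ≠ 0) (hb : b ≠ 0) (hc : c ≠ 0) (n : ℕ)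
    (h1 : ∀ j ≤ 2 * n, 1 - a * q ^ j ≠ 0)
    (h2 : ∀ j < n, 1 - q ^ (j + 1) ≠ 0)
    (h3 : ∀ j < n, b - a * q ^ (j + 1) ≠ 0)
    (h4 : ∀ j < n, c - a * q ^ (j + 1) ≠ 0) :
    ∑ k ∈ Finset.range (n + 1), TT q a b c n k = 
      qPoch (a * q) q n * qPoch (a * q / (b * c)) q n /
        (qPoch (a * q / b) q n * qPoch (a * q / c) q n) := by
  induction n with
  | zero =>
    have a0 := h1 0 (by omega)
    simp only [pow_zero, mul_one] at a0
    simp [TT, PP, QQ, qp_zero, a0]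
  | succ n ih =>
    have ih := ih (fun j hj => h1 j (by omega)) (fun j hj => h2 j (by omega))
      (fun j hj => h3 j (by omega)) (fun j hj => h4 j (by omega))
    have A := partial_sum q a b c hq hb hc n (fun j hj => h1 j (by omega))
      (fun j hj => h2 j (by omega))
      (fun j hj => h3 j (by omega)) (fun j hj => h4 j (by omega)) n le_rfl
    have B := last_term q a b c hq hb hc n (fun j hj => h1 j (by omega))
      (fun j hj => h2 j (by omega))
      (fun j hj => h3 j (by omega)) (fun j hj => h4 j (by omega))
    rw [Finset.sum_sub_distrib, ← Finset.mul_sum, ih] at A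
    rw [Finset.sum_range_succ]
    have h6 := h3 n (by omega)
    have h7 := h4 n (by omega)
    have C : ∑ k ∈ Finset.range (n + 1), TT q a b c (n+1) k + TT q a b c (n+1) (n+1) =
      (1 - a * q ^ n * q) * (b * c - a * q ^ n * q) /
        ((b - a * q ^ n * q) * (c - a * q ^ n * q)) * (qPoch (a * q) q n * qPoch (a * q / (b * c)) q n /
        (qPoch (a * q / b) q n * qPoch (a * q / c) q n)) := by
      linear_combination A + B
    rw [C]
    simp only [qp_succ]
    simp only [pow_succ, ← mul_assoc] at h6 h7
    have e1 : 1 - a * q / b * q ^ n = (b - a * q ^ n * q) / b := by field_simp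
    have e2 : 1 - a * q / c * q ^ n = (c - a * q ^ n * q) / c := by field_simp
    have e3 : 1 - a * q / (b * c) * q ^ n = (b * c - a * q ^ n * q) / (b * c) := by field_simp
    rw [e1, e2, e3, show a * q * q ^ n = a * q ^ n * q by ring]
    generalize qPoch (a * q) q n = p1
    generalize qPoch (a * q / (b * c)) q n = p2
    generalize qPoch (a * q / b) q n = p3
    generalize qPoch (a * q / c) q n = p4
    generalize b - a * q ^ n * q = B at *
    generalize c - a * q ^ n * q = C at *
    generalize b * c - a * q ^ n * q = E
    generalize 1 - a * q ^ n * q = D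
    field_simp

lemma qp_ne {x q : ℂ} {n : ℕ} (h : qPoch x q n ≠ 0) (j : ℕ) (hj : j < n) : 1 - x * q ^ j ≠ 0 := by
  unfold qPoch at h
  exact Finset.prod_ne_zero_iff.1 h j (Finset.mem_range.2 hj)

lemma qp_cont (q : ℂ) (k : ℕ) : Continuous (fun x => qPoch x q k) := by
  unfold qPoch; fun_prop

theorem terminating_vwp_6phi5_summation (q a b c : ℂ) (n : ℕ)
    (hq : q ≠ 0) (ha : a ≠ 1) (hb : b ≠ 0) (hc : c ≠ 0)
    (hden : ∀ k ≤ n, qPoch q q k ≠ 0 ∧ qPoch (a * q / b) q k ≠ 0 ∧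
      qPoch (a * q / c) q k ≠ 0 ∧ qPoch (a * q ^ (n + 1)) q k ≠ 0) :
    ∑ k ∈ Finset.range (n + 1),
        (1 - a * q ^ (2 * k)) / (1 - a) *
          (qPoch a q k * qPoch b q k * qPoch c q k * qPoch (q ^ (-(n : ℤ))) q k /
            (qPoch q q k * qPoch (a * q / b) q k * qPoch (a * q / c) q k *
              qPoch (a * q ^ (n + 1)) q k)) *
          (a * q ^ (n + 1) / (b * c)) ^ k =
      qPoch (a * q) q n * qPoch (a * q / (b * c)) q n /
        (qPoch (a * q / b) q n * qPoch (a * q / c) q n) := by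
  open Filter Topology in
  have ha' : 1 - a ≠ 0 := sub_ne_zero.2 ha.symm
  let F : ℂ → ℂ := fun x => ∑ k ∈ Finset.range (n + 1),
        (1 - x * q ^ (2 * k)) / (1 - x) *
          (qPoch x q k * qPoch b q k * qPoch c q k * qPoch (q ^ (-(n : ℤ))) q k /
            (qPoch q q k * qPoch (x * q / b) q k * qPoch (x * q / c) q k *
              qPoch (x * q ^ (n + 1)) q k)) *
          (x * q ^ (n + 1) / (b * c)) ^ k
  let G : ℂ → ℂ := fun x => qPoch (x * q) q n * qPoch (x * q / (b * c)) q n /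
        (qPoch (x * q / b) q n * qPoch (x * q / c) q n)
  have c1 : ∀ (k : ℕ) (f : ℂ → ℂ), ContinuousAt f a → ContinuousAt (fun x => qPoch (f x) q k) a :=
    fun k f hf => ContinuousAt.comp (f := f) (g := fun x => qPoch x q k) (qp_cont q k).continuousAt hf
  have hF : ContinuousAt F a := by
    apply tendsto_finsetSum
    intro k hk
    have hk : k ≤ n := by simpa [Nat.lt_succ_iff] using hk
    obtain ⟨d1, d2, d3, d4⟩ := hden k hk
    refine ContinuousAt.mul (ContinuousAt.mul (ContinuousAt.div (by fun_prop) (by fun_prop) ha')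
      (ContinuousAt.div ?_ ?_ ?_)) (by fun_prop)
    · exact (((c1 _ _ (by fun_prop)).mul (by fun_prop)).mul (by fun_prop)).mul (by fun_prop)
    · exact ((continuousAt_const.mul (c1 _ _ (by fun_prop))).mul (c1 _ _ (by fun_prop))).mul
        (c1 _ _ (by fun_prop))
    · exact mul_ne_zero (mul_ne_zero (mul_ne_zero d1 d2) d3) d4
  obtain ⟨d1, d2, d3, d4⟩ := hden n le_rfl
  have hG : ContinuousAt G a := by
    refine ContinuousAt.div ((c1 _ _ (by fun_prop)).mul (c1 _ _ (by fun_prop)))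
      ((c1 _ _ (by fun_prop)).mul (c1 _ _ (by fun_prop))) (mul_ne_zero d2 d3)
  have ev : ∀ r : ℂ, ∀ᶠ x in 𝓝[≠] a, x ≠ r := by
    intro r
    by_cases h : a = r
    · subst h; exact eventually_mem_nhdsWithin
    · exact (eventually_ne_nhds h).filter_mono nhdsWithin_le_nhds
  have ev' : ∀ s : ℂ, ∀ m : ℕ, ∀ᶠ x in 𝓝[≠] a, ∀ j ∈ Finset.range m, s - x * q ^ j ≠ 0 := by
    intro s m
    rw [Filter.eventually_all_finset]
    intro j _
    filter_upwards [ev (s / q ^ j)] with x hx h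
    apply hx
    rw [eq_div_iff (pow_ne_zero _ hq)]
    linear_combination -h
  have key : ∀ᶠ x in 𝓝[≠] a, F x = G x := by
    filter_upwards [ev' 1 (2*n+1), ev' b (n+1), ev' c (n+1)] with x x1 x2 x3
    have := gen q x b c hq hb hc n (fun j hj => x1 j (by simp; omega))
      (fun j hj => by have := qp_ne d1 j hj; rwa [← pow_succ'] at this)
      (fun j hj => x2 _ (by simp; omega)) (fun j hj => x3 _ (by simp; omega))
    simp only [F, G]
    rw [← this]
    apply Finset.sum_congr rfl
    intro k _
    simp only [TT, PP, QQ, zpow_neg, zpow_natCast, div_eq_mul_inv, mul_inv, mul_pow, pow_mul]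
    ring
  exact tendsto_nhds_unique_of_eventuallyEq (hF.tendsto.mono_left nhdsWithin_le_nhds)
    (hG.tendsto.mono_left nhdsWithin_le_nhds) key
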